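/- arXiv:1503.05302 — 2 statements merged into one kernel-verified Lean document; each statement's English description precedes it below -/
import Mathlib

section
/- Let D ⊂ ℝ^d be a bounded open set and let p : (0,∞) × D × D → ℝ satisfy: (a) p is jointly continuous and strictly positive on (0,∞) × D × D; (b) for each t > 0, sup_{x,y ∈ D} p(t,x,y) < ∞; (c) ∫_D p(t,x,y) dy ≤ 1 for all t > 0 and x ∈ D; (d) the semigroup property p(t+s,x,y) = ∫_D p(t,x,z)·p(s,z,y) dz for all s,t > 0 and x,y ∈ D. Define P_t f(x) := ∫_D p(t,x,y) f(y) dy for f ∈ L²(D; dx). Then there exist λ₁ ∈ ℝ and a bounded, strictly positive, continuous function φ on D with ∫_D φ(x)² dx = 1 such that P_t φ = e^{−λ₁ t} φ for every t > 0; moreover, for each t > 0, e^{−λ₁ t} equals the spectral radius of the compact operator P_t on L²(D; dx). -/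
open MeasureTheory Metric Set

noncomputable section

/-!
Let `P` be the operator `P₁`, and let `ρ` be the rate at which `sup Pⁿ 1` grows. If `r > ρ`, then
`u_r = ∑ₙ r⁻ⁿ Pⁿ 1` is bounded and `P u_r = r (u_r - 1)`; were `u_r` bounded by `K`, it would be a
supersolution for the rate `r (1 - 1 / K)`, so `sup u_r → ∞` as `r ↓ ρ`. Dividing by the supremum
gives approximate eigenfunctions. A weak `L²` limit point of them is, by boundedness of the kernel,
a pointwise limit, and it is a nonzero eigenfunction `v` of `P₁` with eigenvalue `ρ`.

The function `t ↦ ρ⁻ᵗ Pₜ v` has period `1`, so its average over a period is an eigenfunction of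
every `Pₜ`, with eigenvalue `ρᵗ`; the kernel makes it continuous and strictly positive. Since
`Pₜⁿ 1` grows at most like `rⁿᵗ` for each `r > ρ`, and since `|Pₜⁿ⁺¹ f|` is bounded by a multiple
of `‖f‖₂ Pₜⁿ 1`, no spectral value of `Pₜ` on `L²` exceeds `ρᵗ` in modulus. Hence `λ₁ = -log ρ`.
-/

open Filter Function Topology

theorem le_of_forall_pow_le_mul_pow {a b C : ℝ} (hb : 0 ≤ b) (h : ∀ n : ℕ, a ^ n ≤ C * b ^ n) :
    a ≤ b := by
  rcases hb.eq_or_lt with rfl | hb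
  · simpa using h 1
  by_contra! hab
  obtain ⟨n, hn⟩ := pow_unbounded_of_one_lt C ((one_lt_div hb).2 hab)
  rw [div_pow, lt_div_iff₀ (by positivity)] at hn
  exact (h n).not_gt hn

theorem rpow_le_max_one {x y : ℝ} (hx : 0 ≤ x) (hy0 : 0 ≤ y) (hy1 : y ≤ 1) : x ^ y ≤ max 1 x := by
  rcases le_total x 1 with hx1 | hx1
  · exact le_max_of_le_left (Real.rpow_le_one hx hx1 hy0)
  · exact le_max_of_le_right (Real.rpow_le_self_of_one_le hx1 hy1)

theorem spectralRadius_le_of_norm_pow_succ_le {𝕜 A : Type*} [NontriviallyNormedField 𝕜]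
    [NormedRing A] [NormedAlgebra 𝕜 A] [CompleteSpace A] {a : A} {C r : ℝ} (hr : 0 < r)
    (h : ∀ n : ℕ, ‖a ^ (n + 1)‖ ≤ C * r ^ n) : spectralRadius 𝕜 a ≤ ENNReal.ofReal r := by
  refine iSup₂_le fun z hz => ?_
  rw [← enorm_eq_nnnorm, ← ofReal_norm]
  refine ENNReal.ofReal_le_ofReal ?_
  rcases eq_or_ne z 0 with rfl | hz0
  · simpa using hr.le
  refine le_of_forall_pow_le_mul_pow (C := C * ‖(1 : A)‖ / ‖z‖) hr.le fun n => ?_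
  rw [div_mul_eq_mul_div, le_div_iff₀ (norm_pos_iff.2 hz0)]
  calc ‖z‖ ^ n * ‖z‖ = ‖z ^ (n + 1)‖ := by rw [norm_pow, pow_succ]
    _ ≤ ‖a ^ (n + 1)‖ * ‖(1 : A)‖ :=
      spectrum.norm_le_norm_mul_of_mem (spectrum.pow_mem_pow a (n + 1) hz)
    _ ≤ C * r ^ n * ‖(1 : A)‖ := by gcongr; exact h n
    _ = C * ‖(1 : A)‖ * r ^ n := by ring

theorem enorm_le_spectralRadius_of_apply_eq_smul {𝕜 E : Type*} [NontriviallyNormedField 𝕜]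
    [NormedAddCommGroup E] [NormedSpace 𝕜 E] [CompleteSpace E] {T : E →L[𝕜] E} {z : 𝕜} {v : E}
    (hv : v ≠ 0) (h : T v = z • v) : ‖z‖ₑ ≤ spectralRadius 𝕜 T := by
  have hz : z ∈ spectrum 𝕜 T := by
    rw [ContinuousLinearMap.spectrum_eq]
    exact (Module.End.hasEigenvalue_of_hasEigenvector
      ⟨Module.End.mem_eigenspace_iff.2 h, hv⟩).mem_spectrum
  exact le_iSup₂ (f := fun (z : 𝕜) (_ : z ∈ spectrum 𝕜 T) => (‖z‖₊ : ENNReal)) z hz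

theorem exists_strictMono_tendsto_inner {H : Type*} [NormedAddCommGroup H] [InnerProductSpace ℝ H]
    [CompleteSpace H] [TopologicalSpace.SeparableSpace H] {u : ℕ → H} {R : ℝ}
    (hu : ∀ n, ‖u n‖ ≤ R) :
    ∃ a : H, ∃ k : ℕ → ℕ, StrictMono k ∧
      ∀ h, Tendsto (fun n => inner ℝ (u (k n)) h) atTop (𝓝 (inner ℝ a h)) := by
  obtain ⟨w, -, k, hk, hlim⟩ := WeakDual.isSeqCompact_closedBall ℝ H 0 R
    (x := fun n => StrongDual.toWeakDual (InnerProductSpace.toDual ℝ H (u n))) fun n => by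
      simpa using hu n
  refine ⟨(InnerProductSpace.toDual ℝ H).symm (WeakDual.toStrongDual w), k, hk, fun h => ?_⟩
  rw [InnerProductSpace.toDual_symm_apply]
  exact ((WeakDual.eval_continuous h).tendsto w).comp hlim

theorem intervalIntegral_comp_add_right_of_forall_pos {f : ℝ → ℝ} {T s : ℝ} (hT : 0 ≤ T)
    (hs : 0 ≤ s) (hf : ∀ a, 0 ≤ a → IntervalIntegrable f volume 0 a)
    (hper : ∀ t > 0, f (t + T) = f t) : ∫ t in 0..T, f (t + s) = ∫ t in 0..T, f t := by
  have hshift : ∫ t in T..T + s, f t = ∫ t in 0..s, f t := by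
    calc ∫ t in T..T + s, f t = ∫ t in 0..s, f (t + T) := by
          rw [intervalIntegral.integral_comp_add_right, zero_add, add_comm s]
      _ = ∫ t in 0..s, f t := intervalIntegral.integral_congr_uIoo fun t ht =>
          hper t (by rw [uIoo_of_le hs] at ht; exact ht.1)
  have hfs := hf s hs
  have hfT := hf T hT
  have hfTs := hf (T + s) (by positivity)
  have hsplit_s := intervalIntegral.integral_add_adjacent_intervals hfs (hfs.symm.trans hfTs)
  have hsplit_T := intervalIntegral.integral_add_adjacent_intervals hfT (hfT.symm.trans hfTs)
  rw [intervalIntegral.integral_comp_add_right, zero_add]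
  linarith

section Kernels

variable {X : Type*} [MeasurableSpace X] {μ : Measure X}

/-! ### Bounded kernels and their growth rate -/

/-- The integral operator `f ↦ ∫ k(·, y) f(y) μ(dy)` with kernel `k`, acting on functions. -/
def kernelOp (μ : Measure X) (k : X → X → ℝ) (f : X → ℝ) (x : X) : ℝ :=
  ∫ y, k x y * f y ∂μ

/-- A jointly measurable kernel taking values in a bounded interval `[0, M]`. -/
structure IsBoundedKernel (k : X → X → ℝ) : Prop where
  measurable : Measurable (uncurry k)
  nonneg : ∀ x y, 0 ≤ k x y
  bddAbove : ∃ M, ∀ x y, k x y ≤ M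

theorem kernelOp_const_mul (k : X → X → ℝ) (c : ℝ) (f : X → ℝ) (x : X) :
    kernelOp μ k (fun y => c * f y) x = c * kernelOp μ k f x := by
  simp only [kernelOp, mul_left_comm _ c, integral_const_mul]

theorem kernelOp_congr_ae (k : X → X → ℝ) {f g : X → ℝ} (h : f =ᵐ[μ] g) (x : X) :
    kernelOp μ k f x = kernelOp μ k g x :=
  integral_congr_ae (h.mono fun y hy => congrArg (k x y * ·) hy)

namespace IsBoundedKernel

variable {k l : X → X → ℝ} {f g : X → ℝ}

theorem exists_norm_le (hk : IsBoundedKernel k) : ∃ M, 0 ≤ M ∧ ∀ x y, ‖k x y‖ ≤ M := by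
  obtain ⟨M, hM⟩ := hk.bddAbove
  refine ⟨max M 0, le_max_right _ _, fun x y => ?_⟩
  rw [Real.norm_of_nonneg (hk.nonneg x y)]
  exact le_max_of_le_left (hM x y)

theorem measurable_apply (hk : IsBoundedKernel k) (x : X) : Measurable (k x) :=
  hk.measurable.of_uncurry_left

theorem integrable_mul (hk : IsBoundedKernel k) (hf : Integrable f μ) (x : X) :
    Integrable (fun y => k x y * f y) μ := by
  obtain ⟨M, -, hM⟩ := hk.exists_norm_le
  exact hf.bdd_mul (hk.measurable_apply x).aestronglyMeasurable (.of_forall (hM x))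

theorem kernelOp_nonneg (hk : IsBoundedKernel k) (hf : 0 ≤ f) : 0 ≤ kernelOp μ k f := fun x =>
  integral_nonneg fun y => mul_nonneg (hk.nonneg x y) (hf y)

theorem kernelOp_mono_ae (hk : IsBoundedKernel k) (hf : Integrable f μ) (hg : Integrable g μ)
    (h : f ≤ᵐ[μ] g) : kernelOp μ k f ≤ kernelOp μ k g := fun x =>
  integral_mono_ae (hk.integrable_mul hf x) (hk.integrable_mul hg x)
    (h.mono fun y hy => mul_le_mul_of_nonneg_left hy (hk.nonneg x y))

theorem kernelOp_mono (hk : IsBoundedKernel k) (hf : Integrable f μ) (hg : Integrable g μ)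
    (h : f ≤ g) : kernelOp μ k f ≤ kernelOp μ k g :=
  hk.kernelOp_mono_ae hf hg (.of_forall h)

theorem abs_kernelOp_le (hk : IsBoundedKernel k) (hf : Integrable f μ) (hg : Integrable g μ)
    (h : ∀ᵐ y ∂μ, |f y| ≤ g y) (x : X) : |kernelOp μ k f x| ≤ kernelOp μ k g x :=
  calc |kernelOp μ k f x| ≤ ∫ y, |k x y * f y| ∂μ := abs_integral_le_integral_abs
    _ = kernelOp μ k (fun y => |f y|) x := by
      simp only [kernelOp, abs_mul, abs_of_nonneg (hk.nonneg x _)]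
    _ ≤ kernelOp μ k g x := hk.kernelOp_mono_ae hf.abs hg h x

theorem iterate_one_nonneg (hk : IsBoundedKernel k) (n : ℕ) : 0 ≤ (kernelOp μ k)^[n] 1 := by
  induction n with
  | zero => exact zero_le_one
  | succ n ih => rw [iterate_succ_apply']; exact hk.kernelOp_nonneg ih

variable [IsFiniteMeasure μ]

theorem integrable_kernelOp (hk : IsBoundedKernel k) (hf : Integrable f μ) :
    Integrable (kernelOp μ k f) μ := by
  obtain ⟨M, -, hM⟩ := hk.exists_norm_le
  exact ((hf.comp_snd μ).bdd_mul hk.measurable.aestronglyMeasurable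
    (.of_forall fun z => hM z.1 z.2)).integral_prod_left

theorem kernelOp_kernelOp (hk : IsBoundedKernel k) (hl : IsBoundedKernel l)
    (hf : Integrable f μ) (x : X) :
    kernelOp μ k (kernelOp μ l f) x = ∫ y, (∫ z, k x z * l z y ∂μ) * f y ∂μ := by
  obtain ⟨M, -, hM⟩ := hk.exists_norm_le
  obtain ⟨N, -, hN⟩ := hl.exists_norm_le
  have hint : Integrable (uncurry fun z y => k x z * (l z y * f y)) (μ.prod μ) :=
    ((hf.comp_snd μ).bdd_mul hl.measurable.aestronglyMeasurable
      (.of_forall fun z => hN z.1 z.2)).bdd_mul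
      ((hk.measurable_apply x).comp measurable_fst).aestronglyMeasurable
      (.of_forall fun z => hM x z.1)
  simp only [kernelOp, ← integral_const_mul]
  rw [integral_integral_swap hint]
  simp only [← integral_mul_const, mul_assoc]

theorem tendsto_kernelOp (hk : IsBoundedKernel k) {F : ℕ → X → ℝ} {C : ℝ}
    (hF : ∀ n, AEStronglyMeasurable (F n) μ) (hC : ∀ n x, ‖F n x‖ ≤ C)
    (hlim : ∀ x, Tendsto (fun n => F n x) atTop (𝓝 (f x))) (x : X) :
    Tendsto (fun n => kernelOp μ k (F n) x) atTop (𝓝 (kernelOp μ k f x)) := by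
  obtain ⟨M, hM0, hM⟩ := hk.exists_norm_le
  refine tendsto_integral_of_dominated_convergence (fun _ => M * C)
    (fun n => (hk.measurable_apply x).aestronglyMeasurable.mul (hF n)) (integrable_const _)
    (fun n => .of_forall fun y => ?_) (.of_forall fun y => (hlim y).const_mul _)
  rw [norm_mul]
  exact mul_le_mul (hM x y) (hC n y) (norm_nonneg _) hM0

theorem integrable_iterate_one (hk : IsBoundedKernel k) (n : ℕ) :
    Integrable ((kernelOp μ k)^[n] 1) μ := by
  induction n with
  | zero => exact integrable_const 1
  | succ n ih => rw [iterate_succ_apply']; exact hk.integrable_kernelOp ih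

theorem iterate_one_le_of_kernelOp_le (hk : IsBoundedKernel k) {r : ℝ} (hr : 0 ≤ r)
    (hf : Integrable f μ) (h1 : 1 ≤ f) (h : ∀ x, kernelOp μ k f x ≤ r * f x) (n : ℕ) (x : X) :
    (kernelOp μ k)^[n] 1 x ≤ r ^ n * f x := by
  induction n generalizing x with
  | zero => simpa using h1 x
  | succ n ih =>
    calc (kernelOp μ k)^[n + 1] 1 x = kernelOp μ k ((kernelOp μ k)^[n] 1) x := by
          rw [iterate_succ_apply']
      _ ≤ kernelOp μ k (fun y => r ^ n * f y) x :=
          hk.kernelOp_mono (hk.integrable_iterate_one n) (hf.const_mul _) ih x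
      _ = r ^ n * kernelOp μ k f x := kernelOp_const_mul k _ f x
      _ ≤ r ^ n * (r * f x) := by gcongr; exact h x
      _ = r ^ (n + 1) * f x := by ring

end IsBoundedKernel

/-- The iterates of the integral operator with kernel `k`, applied to the constant function `1`,
grow at most geometrically with ratio `r`, uniformly in space. -/
def IsGrowthBound (μ : Measure X) (k : X → X → ℝ) (r : ℝ) : Prop :=
  0 ≤ r ∧ ∃ C, ∀ n x, (kernelOp μ k)^[n] 1 x ≤ C * r ^ n

/-- The infimum of the growth bounds of `k`, i.e. the spectral radius of the integral operator
with kernel `k` on bounded functions. It is `0` by convention if `k` has no growth bound. -/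
def growthRate (μ : Measure X) (k : X → X → ℝ) : ℝ := sInf {r | IsGrowthBound μ k r}

/-- The sum `∑ n, r⁻ⁿ Pⁿ 1` over the iterates of the integral operator `P` with kernel `k`; it is
`r` times the resolvent of `P` at `r`, applied to the constant function `1`. -/
def neumannSum (μ : Measure X) (k : X → X → ℝ) (r : ℝ) (x : X) : ℝ :=
  ∑' n : ℕ, (kernelOp μ k)^[n] 1 x / r ^ n

theorem growthRate_nonneg (k : X → X → ℝ) : 0 ≤ growthRate μ k :=
  Real.sInf_nonneg fun _ hr => hr.1

theorem IsGrowthBound.growthRate_le {k : X → X → ℝ} {r : ℝ} (h : IsGrowthBound μ k r) :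
    growthRate μ k ≤ r :=
  csInf_le ⟨0, fun _ hs => hs.1⟩ h

namespace IsBoundedKernel

variable {k : X → X → ℝ} {r : ℝ} [IsFiniteMeasure μ]

theorem exists_isGrowthBound (hk : IsBoundedKernel k) : ∃ r, IsGrowthBound μ k r := by
  obtain ⟨M, hM0, hM⟩ := hk.exists_norm_le
  have hMμ : 0 ≤ M * μ.real univ := by positivity
  refine ⟨M * μ.real univ, hMμ, 1, fun n x => ?_⟩
  rw [one_mul, ← mul_one ((M * μ.real univ) ^ n)]
  refine hk.iterate_one_le_of_kernelOp_le hMμ (integrable_const 1) le_rfl (fun x => ?_) n x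
  calc kernelOp μ k 1 x ≤ ∫ _, M ∂μ :=
        integral_mono (hk.integrable_mul (integrable_const 1) x) (integrable_const M) fun y => by
          simpa using (le_abs_self _).trans (hM x y)
    _ = M * μ.real univ * 1 := by simp [mul_comm]

theorem exists_iterate_one_le (hk : IsBoundedKernel k) (hr : growthRate μ k < r) :
    ∃ C, 0 ≤ C ∧ ∀ n x, (kernelOp μ k)^[n] 1 x ≤ C * r ^ n := by
  obtain ⟨s, ⟨hs0, C, hC⟩, hsr⟩ := exists_lt_of_csInf_lt hk.exists_isGrowthBound hr
  refine ⟨max C 0, le_max_right _ _, fun n x => (hC n x).trans ?_⟩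
  gcongr
  exact le_max_left _ _

theorem exists_summable_bound (hk : IsBoundedKernel k) (hr : growthRate μ k < r) :
    ∃ a : ℕ → ℝ, Summable a ∧ ∀ n x, ‖(kernelOp μ k)^[n] 1 x / r ^ n‖ ≤ a n := by
  have h0 := growthRate_nonneg (μ := μ) k
  obtain ⟨s, hs, hsr⟩ := exists_between hr
  obtain ⟨C, -, hC⟩ := hk.exists_iterate_one_le hs
  have hs0 : 0 ≤ s := h0.trans hs.le
  have hr0 : 0 < r := hs0.trans_lt hsr
  refine ⟨fun n => C * (s / r) ^ n,
    (summable_geometric_of_lt_one (by positivity) ((div_lt_one hr0).2 hsr)).mul_left C,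
    fun n x => ?_⟩
  beta_reduce
  rw [Real.norm_of_nonneg (div_nonneg (hk.iterate_one_nonneg n x) (by positivity)), div_pow,
    ← mul_div_assoc]
  gcongr
  exact hC n x

theorem summable_neumannSum (hk : IsBoundedKernel k) (hr : growthRate μ k < r) (x : X) :
    Summable fun n : ℕ => (kernelOp μ k)^[n] 1 x / r ^ n := by
  obtain ⟨a, ha, hbound⟩ := hk.exists_summable_bound hr
  exact .of_norm_bounded ha fun n => hbound n x

theorem one_le_neumannSum (hk : IsBoundedKernel k) (hr : growthRate μ k < r) (x : X) :
    1 ≤ neumannSum μ k r x := by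
  have hr0 : 0 ≤ r := (growthRate_nonneg k).trans hr.le
  simpa [neumannSum] using (hk.summable_neumannSum hr x).le_tsum 0 fun n _ =>
    div_nonneg (hk.iterate_one_nonneg n x) (by positivity)

theorem bddAbove_range_neumannSum (hk : IsBoundedKernel k) (hr : growthRate μ k < r) :
    BddAbove (range (neumannSum μ k r)) := by
  obtain ⟨a, ha, hbound⟩ := hk.exists_summable_bound hr
  refine ⟨∑' n, a n, forall_mem_range.2 fun x => ?_⟩
  exact (hk.summable_neumannSum hr x).tsum_le_tsum (fun n => (le_abs_self _).trans (hbound n x)) ha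

theorem integrable_neumannSum (hk : IsBoundedKernel k) (hr : growthRate μ k < r) :
    Integrable (neumannSum μ k r) μ := by
  obtain ⟨a, ha, hbound⟩ := hk.exists_summable_bound hr
  have hmeas : AEStronglyMeasurable (neumannSum μ k r) μ :=
    aestronglyMeasurable_of_tendsto_ae atTop
      (fun n => (integrable_finsetSum (Finset.range n) fun i _ =>
        (hk.integrable_iterate_one i).div_const (r ^ i)).aestronglyMeasurable)
      (.of_forall fun x => (hk.summable_neumannSum hr x).hasSum.tendsto_sum_nat)
  exact .of_bound hmeas (∑' n, a n) (.of_forall fun x =>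
    tsum_of_norm_bounded ha.hasSum fun n => hbound n x)

theorem kernelOp_neumannSum (hk : IsBoundedKernel k) (hr : growthRate μ k < r) (x : X) :
    kernelOp μ k (neumannSum μ k r) x = r * (neumannSum μ k r x - 1) := by
  obtain ⟨a, ha, hbound⟩ := hk.exists_summable_bound hr
  obtain ⟨M, hM0, hM⟩ := hk.exists_norm_le
  have hr0 : 0 < r := (growthRate_nonneg k).trans_lt hr
  have hswap : HasSum (fun n : ℕ => ∫ y, k x y * ((kernelOp μ k)^[n] 1 y / r ^ n) ∂μ)
      (kernelOp μ k (neumannSum μ k r) x) := by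
    refine hasSum_integral_of_dominated_convergence (fun n _ => M * a n)
      (fun n => (hk.integrable_mul ((hk.integrable_iterate_one n).div_const _) x).1)
      (fun n => .of_forall fun y => ?_) (.of_forall fun _ => ha.mul_left M)
      (integrable_const _) (.of_forall fun y => (hk.summable_neumannSum hr y).hasSum.mul_left _)
    rw [norm_mul]
    exact mul_le_mul (hM x y) (hbound n y) (norm_nonneg _) hM0
  rw [← hswap.tsum_eq, neumannSum, (hk.summable_neumannSum hr x).tsum_eq_zero_add]
  simp only [iterate_zero, id_eq, Pi.one_apply, pow_zero, div_one, add_sub_cancel_left]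
  rw [← tsum_mul_left]
  refine tsum_congr fun n => ?_
  simp only [← mul_div_assoc, integral_div, iterate_succ_apply', pow_succ]
  rw [kernelOp]
  field_simp

theorem growthRate_le_of_neumannSum_le (hk : IsBoundedKernel k) (hr : growthRate μ k < r) {K : ℝ}
    (hK1 : 1 ≤ K) (hK : ∀ x, neumannSum μ k r x ≤ K) : growthRate μ k ≤ r * (1 - 1 / K) := by
  have hr0 : 0 < r := (growthRate_nonneg k).trans_lt hr
  have hK0 : 0 < K := one_pos.trans_le hK1
  have hq : 0 ≤ r * (1 - 1 / K) := mul_nonneg hr0.le (sub_nonneg.2 ((div_le_one hK0).2 hK1))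
  have hsuper : ∀ x, kernelOp μ k (neumannSum μ k r) x ≤ r * (1 - 1 / K) * neumannSum μ k r x := by
    intro x
    have : neumannSum μ k r x / K ≤ 1 := (div_le_one hK0).2 (hK x)
    rw [hk.kernelOp_neumannSum hr, mul_assoc]
    gcongr
    linarith [show (1 - 1 / K) * neumannSum μ k r x
      = neumannSum μ k r x - neumannSum μ k r x / K by ring]
  refine IsGrowthBound.growthRate_le ⟨hq, K, fun n x => ?_⟩
  calc (kernelOp μ k)^[n] 1 x ≤ (r * (1 - 1 / K)) ^ n * neumannSum μ k r x :=
        hk.iterate_one_le_of_kernelOp_le hq (hk.integrable_neumannSum hr)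
          (hk.one_le_neumannSum hr) hsuper n x
    _ ≤ (r * (1 - 1 / K)) ^ n * K := by gcongr; exact hK x
    _ = K * (r * (1 - 1 / K)) ^ n := mul_comm _ _

end IsBoundedKernel

/-! ### Perron eigenfunctions -/

theorem exists_strictMono_tendsto_integral_mul [IsFiniteMeasure μ]
    [MeasurableSpace.CountablyGenerated X] {f : ℕ → X → ℝ} {C : ℝ}
    (hf : ∀ n, AEStronglyMeasurable (f n) μ) (hC : ∀ n, ∀ᵐ x ∂μ, ‖f n x‖ ≤ C) :
    ∃ j : ℕ → ℕ, StrictMono j ∧ ∀ h, MemLp h 2 μ →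
      ∃ a, Tendsto (fun n => ∫ x, h x * f (j n) x ∂μ) atTop (𝓝 a) := by
  have : Fact ((2 : ENNReal) ≠ ⊤) := ⟨ENNReal.ofNat_ne_top⟩
  have hfL : ∀ n, MemLp (f n) 2 μ := fun n => .of_bound (hf n) C (hC n)
  obtain ⟨a, j, hj, hlim⟩ := exists_strictMono_tendsto_inner (u := fun n => (hfL n).toLp (f n))
    fun n => Lp.norm_le_of_ae_bound (le_max_right C 0) <| by
      filter_upwards [(hfL n).coeFn_toLp, hC n] with x hx hCx
      exact hx ▸ hCx.trans (le_max_left _ _)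
  refine ⟨j, hj, fun h hh => ⟨_, (hlim (hh.toLp h)).congr fun n => ?_⟩⟩
  rw [L2.inner_def]
  refine integral_congr_ae ?_
  filter_upwards [(hfL (j n)).coeFn_toLp, hh.coeFn_toLp] with x hfx hhx
  rw [hfx, hhx, RCLike.inner_apply, conj_trivial]

/-- A nonnegative bounded eigenfunction of the integral operator with kernel `k` for the eigenvalue
`ρ` that does not vanish almost everywhere. The eigenvalue equation is required at every point, not
only almost everywhere. -/
structure IsPerronEigenfunction (μ : Measure X) (k : X → X → ℝ) (ρ : ℝ) (v : X → ℝ) : Prop where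
  integrable : Integrable v μ
  nonneg : 0 ≤ v
  bddAbove : ∃ M, ∀ x, v x ≤ M
  integral_pos : 0 < ∫ x, v x ∂μ
  kernelOp_eq : ∀ x, kernelOp μ k v x = ρ * v x

namespace IsPerronEigenfunction

variable {k : X → X → ℝ} {ρ : ℝ} {v : X → ℝ}

theorem exists_abs_le (hv : IsPerronEigenfunction μ k ρ v) : ∃ M, ∀ x, |v x| ≤ M :=
  hv.bddAbove.imp fun _ hM x => (abs_of_nonneg (hv.nonneg x)).trans_le (hM x)

theorem const_mul (hv : IsPerronEigenfunction μ k ρ v) {c : ℝ} (hc : 0 < c) :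
    IsPerronEigenfunction μ k ρ fun x => c * v x where
  integrable := hv.integrable.const_mul c
  nonneg x := mul_nonneg hc.le (hv.nonneg x)
  bddAbove := hv.bddAbove.imp' (c * ·) fun _ hM x => mul_le_mul_of_nonneg_left (hM x) hc.le
  integral_pos := by rw [integral_const_mul]; exact mul_pos hc hv.integral_pos
  kernelOp_eq x := by rw [kernelOp_const_mul, hv.kernelOp_eq, mul_left_comm]

theorem pos_of_ae_pos (hv : IsPerronEigenfunction μ k ρ v) (hk : IsBoundedKernel k) (hρ : 0 < ρ)
    {x : X} (hx : ∀ᵐ y ∂μ, 0 < k x y) : 0 < v x := by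
  refine pos_of_mul_pos_right (?_ : 0 < ρ * v x) hρ.le
  have hvpos := (integral_pos_iff_support_of_nonneg hv.nonneg hv.integrable).1 hv.integral_pos
  rw [← hv.kernelOp_eq, kernelOp, integral_pos_iff_support_of_nonneg
    (fun y => mul_nonneg (hk.nonneg x y) (hv.nonneg y)) (hk.integrable_mul hv.integrable x)]
  exact hvpos.trans_le (measure_mono_ae (hx.mono fun y hy hvy => mul_ne_zero hy.ne' hvy))

theorem continuousOn [TopologicalSpace X] [FirstCountableTopology X]
    (hv : IsPerronEigenfunction μ k ρ v) (hk : IsBoundedKernel k) (hρ : ρ ≠ 0) {s : Set X}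
    (hks : ∀ᵐ y ∂μ, ContinuousOn (fun x => k x y) s) : ContinuousOn v s := by
  obtain ⟨M, -, hM⟩ := hk.exists_norm_le
  have hcont : ContinuousOn (kernelOp μ k v) s :=
    continuousOn_of_dominated (bound := fun y => M * ‖v y‖)
      (fun x _ => (hk.integrable_mul hv.integrable x).1)
      (fun x _ => .of_forall fun y => (norm_mul _ _).trans_le <| by gcongr; exact hM x y)
      (hv.integrable.norm.const_mul M) (hks.mono fun y hy => hy.mul continuousOn_const)
  refine (hcont.div_const ρ).congr fun x _ => eq_div_of_mul_eq hρ ?_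
  rw [hv.kernelOp_eq, mul_comm]

theorem memLp [IsFiniteMeasure μ] (hv : IsPerronEigenfunction μ k ρ v) (q : ENNReal) :
    MemLp v q μ := by
  obtain ⟨M, hM⟩ := hv.exists_abs_le
  exact .of_bound hv.integrable.1 M (.of_forall hM)

theorem integral_sq_pos [IsFiniteMeasure μ] (hv : IsPerronEigenfunction μ k ρ v) :
    0 < ∫ x, v x ^ 2 ∂μ := by
  have hvpos := (integral_pos_iff_support_of_nonneg hv.nonneg hv.integrable).1 hv.integral_pos
  rw [integral_pos_iff_support_of_nonneg (fun x => sq_nonneg (v x)) (hv.memLp 2).integrable_sq]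
  exact hvpos.trans_le (measure_mono fun x hx => pow_ne_zero 2 hx)

theorem exists_integral_sq_eq_one [IsFiniteMeasure μ] (hv : IsPerronEigenfunction μ k ρ v) :
    ∃ c > 0, ∫ x, (c * v x) ^ 2 ∂μ = 1 := by
  have hI := hv.integral_sq_pos
  refine ⟨(√(∫ x, v x ^ 2 ∂μ))⁻¹, inv_pos.2 (Real.sqrt_pos.2 hI), ?_⟩
  simp_rw [mul_pow]
  rw [integral_const_mul, inv_pow, Real.sq_sqrt hI.le, inv_mul_cancel₀ hI.ne']

end IsPerronEigenfunction

namespace IsBoundedKernel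

variable {k : X → X → ℝ} [IsFiniteMeasure μ]

theorem memLp_apply (hk : IsBoundedKernel k) (x : X) (q : ENNReal) : MemLp (k x) q μ := by
  obtain ⟨M, -, hM⟩ := hk.exists_norm_le
  exact .of_bound (hk.measurable_apply x).aestronglyMeasurable M (.of_forall (hM x))

section ApproximateEigenfunctions

variable {v : ℕ → X → ℝ} {r ε : ℕ → ℝ} {ρ : ℝ}

theorem exists_strictMono_tendsto_of_approx [MeasurableSpace.CountablyGenerated X]
    (hk : IsBoundedKernel k) (hρ : ρ ≠ 0) (hr0 : ∀ n, r n ≠ 0)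
    (hr : Tendsto r atTop (𝓝 ρ)) (hε : Tendsto ε atTop (𝓝 0))
    (hv : ∀ n, Integrable (v n) μ) (hv1 : ∀ n x, ‖v n x‖ ≤ 1)
    (hPv : ∀ n x, kernelOp μ k (v n) x = r n * (v n x - ε n)) :
    ∃ j : ℕ → ℕ, StrictMono j ∧ ∃ w : X → ℝ, ∀ x,
      Tendsto (fun n => v (j n) x) atTop (𝓝 (w x)) := by
  obtain ⟨j, hj, hlim⟩ := exists_strictMono_tendsto_integral_mul (fun n => (hv n).1)
    fun n => .of_forall (hv1 n)
  choose w hw using fun x => hlim (k x) (hk.memLp_apply x 2)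
  refine ⟨j, hj, fun x => w x / ρ + 0, fun x => ?_⟩
  refine (((hw x).div (hr.comp hj.tendsto_atTop) hρ).add (hε.comp hj.tendsto_atTop)).congr
    fun n => ?_
  have hPvx : ∫ y, k x y * v (j n) y ∂μ = r (j n) * (v (j n) x - ε (j n)) := hPv (j n) x
  simp [hPvx, hr0]

theorem isPerronEigenfunction_of_tendsto (hk : IsBoundedKernel k) {w : X → ℝ} (hρ : 0 < ρ)
    (hr0 : ∀ n, 0 < r n) (hr : Tendsto r atTop (𝓝 ρ)) (hε : Tendsto ε atTop (𝓝 0))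
    (hv : ∀ n, Integrable (v n) μ) (hv01 : ∀ n x, v n x ∈ Icc 0 1)
    (hw : ∀ x, Tendsto (fun n => v n x) atTop (𝓝 (w x)))
    (hPv : ∀ n x, kernelOp μ k (v n) x = r n * (v n x - ε n)) (hhalf : ∀ n, ∃ x, 1 / 2 ≤ v n x) :
    IsPerronEigenfunction μ k ρ w := by
  obtain ⟨M, hM0, hM⟩ := hk.exists_norm_le
  have hw01 : ∀ x, w x ∈ Icc 0 1 := fun x => isClosed_Icc.mem_of_tendsto (hw x)
    (.of_forall fun n => hv01 n x)
  have hv1 : ∀ n x, ‖v n x‖ ≤ 1 := fun n x =>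
    (Real.norm_of_nonneg (hv01 n x).1).trans_le (hv01 n x).2
  have hint : Tendsto (fun n => ∫ x, v n x ∂μ) atTop (𝓝 (∫ x, w x ∂μ)) :=
    tendsto_integral_of_dominated_convergence (fun _ => 1) (fun n => (hv n).1)
      (integrable_const 1) (fun n => .of_forall (hv1 n)) (.of_forall hw)
  have hlower : ∀ n, r n * (1 / 2 - ε n) ≤ M * ∫ x, v n x ∂μ := by
    intro n
    obtain ⟨x, hx⟩ := hhalf n
    calc r n * (1 / 2 - ε n) ≤ r n * (v n x - ε n) := by have := (hr0 n).le; gcongr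
      _ = ∫ y, k x y * v n y ∂μ := (hPv n x).symm
      _ ≤ ∫ y, M * v n y ∂μ := integral_mono (hk.integrable_mul (hv n) x) ((hv n).const_mul M)
          fun y => mul_le_mul_of_nonneg_right ((le_abs_self _).trans (hM x y)) (hv01 n y).1
      _ = M * ∫ y, v n y ∂μ := integral_const_mul M _
  have hlim : ρ * (1 / 2 - 0) ≤ M * ∫ x, w x ∂μ :=
    le_of_tendsto_of_tendsto' (hr.mul (hε.const_sub _)) (hint.const_mul M) hlower
  refine ⟨.of_bound (aestronglyMeasurable_of_tendsto_ae atTop (fun n => (hv n).1) (.of_forall hw))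
    1 (.of_forall fun x => (Real.norm_of_nonneg (hw01 x).1).trans_le (hw01 x).2),
    fun x => (hw01 x).1, ⟨1, fun x => (hw01 x).2⟩, pos_of_mul_pos_right ?_ hM0, fun x => ?_⟩
  · exact lt_of_lt_of_le (by linarith) hlim
  · refine tendsto_nhds_unique (hk.tendsto_kernelOp (fun n => (hv n).1) hv1 hw x) ?_
    simpa [hPv] using hr.mul ((hw x).sub hε)

end ApproximateEigenfunctions

theorem exists_approx_eigenfunction [Nonempty X] (hk : IsBoundedKernel k) {r : ℝ}
    (hr : growthRate μ k < r) :
    ∃ v : X → ℝ, ∃ ε : ℝ, Integrable v μ ∧ (∀ x, v x ∈ Icc 0 1) ∧ (∃ x, 1 / 2 ≤ v x) ∧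
      0 ≤ ε ∧ r * ε ≤ r - growthRate μ k ∧ ∀ x, kernelOp μ k v x = r * (v x - ε) := by
  set u := neumannSum μ k r
  have hbdd := hk.bddAbove_range_neumannSum hr
  have hu1 := hk.one_le_neumannSum hr
  have huS : ∀ x, u x ≤ ⨆ y, u y := le_ciSup hbdd
  have hS1 : 1 ≤ ⨆ y, u y := (hu1 (Classical.arbitrary X)).trans (huS _)
  set S := ⨆ y, u y
  have hS0 : 0 < S := one_pos.trans_le hS1
  obtain ⟨x, hx⟩ : ∃ x, S / 2 < u x := exists_lt_of_lt_ciSup (half_lt_self hS0)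
  refine ⟨fun x => u x / S, 1 / S, (hk.integrable_neumannSum hr).div_const S,
    fun x => ⟨div_nonneg (zero_le_one.trans (hu1 x)) hS0.le, (div_le_one hS0).2 (huS x)⟩,
    ⟨x, (le_div_iff₀ hS0).2 (by linarith)⟩, by positivity, ?_, fun x => ?_⟩
  · linarith [hk.growthRate_le_of_neumannSum_le hr hS1 huS]
  · calc kernelOp μ k (fun y => u y / S) x = S⁻¹ * kernelOp μ k u x := by
          simp only [div_eq_inv_mul, kernelOp_const_mul]
      _ = r * (u x / S - 1 / S) := by rw [hk.kernelOp_neumannSum hr]; ring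

theorem exists_isPerronEigenfunction_growthRate [MeasurableSpace.CountablyGenerated X]
    (hk : IsBoundedKernel k) (hρ : 0 < growthRate μ k) :
    ∃ v, IsPerronEigenfunction μ k (growthRate μ k) v := by
  have : Nonempty X := by
    by_contra hX
    rw [not_nonempty_iff] at hX
    exact hρ.not_ge (IsGrowthBound.growthRate_le ⟨le_rfl, 0, fun _ x => isEmptyElim x⟩)
  set ρ := growthRate μ k
  set r : ℕ → ℝ := fun n => ρ + 1 / (n + 1)
  have hρr : ∀ n, ρ < r n := fun n => lt_add_of_pos_right ρ (by positivity)
  have hr0 : ∀ n, 0 < r n := fun n => hρ.trans (hρr n)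
  have hr : Tendsto r atTop (𝓝 ρ) := by
    simpa [r] using tendsto_one_div_add_atTop_nhds_zero_nat.const_add ρ
  choose v ε hv hv01 hhalf hε0 hεr hPv using fun n => hk.exists_approx_eigenfunction (hρr n)
  have hε : Tendsto ε atTop (𝓝 0) := by
    have hlim := (hr.sub_const ρ).div hr hρ.ne'
    rw [sub_self, zero_div] at hlim
    exact squeeze_zero hε0 (fun n => (le_div_iff₀' (hr0 n)).2 (hεr n)) hlim
  obtain ⟨j, hj, w, hw⟩ := hk.exists_strictMono_tendsto_of_approx hρ.ne' (fun n => (hr0 n).ne') hr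
    hε hv (fun n x => (Real.norm_of_nonneg (hv01 n x).1).trans_le (hv01 n x).2) hPv
  have hj' := hj.tendsto_atTop
  exact ⟨w, hk.isPerronEigenfunction_of_tendsto hρ (fun n => hr0 (j n)) (hr.comp hj')
    (hε.comp hj') (fun n => hv (j n)) (fun n => hv01 (j n)) hw (fun n => hPv (j n))
    fun n => hhalf (j n)⟩

theorem pow_le_iterate_one (hk : IsBoundedKernel k) {B : Set X} {c : ℝ} (hB : MeasurableSet B)
    (hc : 0 ≤ c) (hkB : ∀ x ∈ B, ∀ y ∈ B, c ≤ k x y) (n : ℕ) {x : X} (hx : x ∈ B) :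
    (c * μ.real B) ^ n ≤ (kernelOp μ k)^[n] 1 x := by
  induction n generalizing x with
  | zero => simp
  | succ n ih =>
    have hint := hk.integrable_mul (hk.integrable_iterate_one n) (μ := μ) x
    calc (c * μ.real B) ^ (n + 1) = ∫ _ in B, c * (c * μ.real B) ^ n ∂μ := by
          rw [setIntegral_const, smul_eq_mul]; ring
      _ ≤ ∫ y in B, k x y * (kernelOp μ k)^[n] 1 y ∂μ :=
          setIntegral_mono_on (integrable_const _).integrableOn hint.integrableOn hB fun y hy =>
            mul_le_mul (hkB x hx y hy) (ih hy) (by positivity) (hk.nonneg x y)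
      _ ≤ ∫ y, k x y * (kernelOp μ k)^[n] 1 y ∂μ :=
          setIntegral_le_integral hint <| .of_forall fun y =>
            mul_nonneg (hk.nonneg x y) (hk.iterate_one_nonneg n y)
      _ = (kernelOp μ k)^[n + 1] 1 x := by rw [iterate_succ_apply', kernelOp]

theorem mul_measureReal_le_growthRate (hk : IsBoundedKernel k) {B : Set X} {c : ℝ}
    (hB : MeasurableSet B) (hBne : B.Nonempty) (hc : 0 ≤ c)
    (hkB : ∀ x ∈ B, ∀ y ∈ B, c ≤ k x y) : c * μ.real B ≤ growthRate μ k := by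
  obtain ⟨x, hx⟩ := hBne
  refine le_csInf hk.exists_isGrowthBound fun r ⟨hr, C, hC⟩ => ?_
  exact le_of_forall_pow_le_mul_pow hr fun n =>
    (hk.pow_le_iterate_one hB hc hkB n hx).trans (hC n x)

theorem growthRate_pos [TopologicalSpace X] [OpensMeasurableSpace X] (hk : IsBoundedKernel k)
    {D : Set X} (hD : MeasurableSet D) {x : X} (hxD : x ∈ D) (hμx : ∀ s ∈ 𝓝[D] x, 0 < μ s)
    (hcont : ContinuousWithinAt (uncurry k) (D ×ˢ D) (x, x)) (hx : 0 < k x x) :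
    0 < growthRate μ k := by
  have hlarge : ∀ᶠ q in 𝓝[D] x ×ˢ 𝓝[D] x, k x x / 2 < uncurry k q := by
    rw [← nhdsWithin_prod_eq]
    exact hcont.eventually (lt_mem_nhds (half_lt_self hx))
  obtain ⟨s, hs, hks⟩ := mem_prod_self_iff.1 hlarge
  obtain ⟨U, hU, hxU, hUs⟩ := mem_nhdsWithin.1 hs
  have hpos : 0 < μ.real (U ∩ D) := ENNReal.toReal_pos
    (hμx _ (inter_mem (mem_nhdsWithin_of_mem_nhds (hU.mem_nhds hxU)) self_mem_nhdsWithin)).ne'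
    (measure_ne_top _ _)
  exact (by positivity : 0 < k x x / 2 * μ.real (U ∩ D)).trans_le <|
    hk.mul_measureReal_le_growthRate (hU.measurableSet.inter hD) ⟨x, hxU, hxD⟩ (by positivity)
      fun y hy z hz => (hks (mk_mem_prod (hUs hy) (hUs hz))).le

/-! ### The spectral radius on `L²` -/

section SpectralRadius

variable {T : Lp ℝ 2 μ →L[ℝ] Lp ℝ 2 μ}

theorem exists_abs_kernelOp_le_norm (hk : IsBoundedKernel k) :
    ∃ A, 0 ≤ A ∧ ∀ (f : Lp ℝ 2 μ) (x : X), |kernelOp μ k f x| ≤ A * ‖f‖ := by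
  obtain ⟨M, hM0, hM⟩ := hk.exists_norm_le
  refine ⟨(measureUnivNNReal μ : ℝ) ^ (2 : ENNReal).toReal⁻¹ * M, by positivity, fun f x => ?_⟩
  have hkx := hk.memLp_apply (μ := μ) x 2
  have hinner : kernelOp μ k f x = inner ℝ (hkx.toLp (k x)) f := by
    rw [L2.inner_def]
    refine integral_congr_ae ?_
    filter_upwards [hkx.coeFn_toLp] with y hy
    rw [hy, RCLike.inner_apply, conj_trivial, mul_comm]
  rw [hinner]
  refine (abs_real_inner_le_norm _ _).trans ?_
  gcongr
  refine Lp.norm_le_of_ae_bound hM0 ?_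
  filter_upwards [hkx.coeFn_toLp] with y hy
  exact hy ▸ hM x y

-- One application of `T` turns an `L²` function into a bounded one; the other `n` are compared with
-- their action on constants.
theorem exists_abs_pow_succ_apply_le (hk : IsBoundedKernel k)
    (hT : ∀ f : Lp ℝ 2 μ, T f =ᵐ[μ] kernelOp μ k f) :
    ∃ A, 0 ≤ A ∧ ∀ (n : ℕ) (f : Lp ℝ 2 μ),
      ∀ᵐ x ∂μ, |(T ^ (n + 1)) f x| ≤ A * ‖f‖ * (kernelOp μ k)^[n] 1 x := by
  obtain ⟨A, hA, hAf⟩ := hk.exists_abs_kernelOp_le_norm (μ := μ)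
  refine ⟨A, hA, fun n f => ?_⟩
  induction n with
  | zero =>
    filter_upwards [hT f] with x hx
    simpa [hx] using hAf f x
  | succ n ih =>
    rw [pow_succ' T, mul_apply_eq_comp]
    filter_upwards [hT ((T ^ (n + 1)) f)] with x hx
    rw [hx, iterate_succ_apply', ← kernelOp_const_mul]
    exact hk.abs_kernelOp_le ((Lp.memLp _).integrable one_le_two)
      ((hk.integrable_iterate_one n).const_mul _) ih x

theorem spectralRadius_le (hk : IsBoundedKernel k) (hT : ∀ f : Lp ℝ 2 μ, T f =ᵐ[μ] kernelOp μ k f)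
    {r : ℝ} (hr : 0 < r) (h : IsGrowthBound μ k r) : spectralRadius ℝ T ≤ ENNReal.ofReal r := by
  obtain ⟨A, hA, hAT⟩ := hk.exists_abs_pow_succ_apply_le hT
  obtain ⟨-, C, hC⟩ := h
  set m : ℝ := (measureUnivNNReal μ : ℝ) ^ (2 : ENNReal).toReal⁻¹
  refine spectralRadius_le_of_norm_pow_succ_le (C := m * A * max C 0) hr fun n =>
    ContinuousLinearMap.opNorm_le_bound _ (by positivity) fun f => ?_
  calc ‖(T ^ (n + 1)) f‖ ≤ m * (A * ‖f‖ * (max C 0 * r ^ n)) := by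
        refine Lp.norm_le_of_ae_bound (by positivity) ?_
        filter_upwards [hAT n f] with x hx
        refine hx.trans ?_
        gcongr
        refine (hC n x).trans ?_
        gcongr
        exact le_max_left _ _
    _ = m * A * max C 0 * r ^ n * ‖f‖ := by ring

end SpectralRadius

end IsBoundedKernel

theorem IsPerronEigenfunction.le_spectralRadius [IsFiniteMeasure μ] {k : X → X → ℝ} {ρ : ℝ}
    {v : X → ℝ} (hv : IsPerronEigenfunction μ k ρ v) {T : Lp ℝ 2 μ →L[ℝ] Lp ℝ 2 μ}
    (hT : ∀ f : Lp ℝ 2 μ, T f =ᵐ[μ] kernelOp μ k f) :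
    ENNReal.ofReal ρ ≤ spectralRadius ℝ T := by
  have hvL := hv.memLp 2
  have hne : hvL.toLp v ≠ 0 := fun h0 => by
    have : v =ᵐ[μ] 0 := hvL.coeFn_toLp.symm.trans (h0 ▸ Lp.coeFn_zero _ _ _)
    simpa [integral_congr_ae this] using hv.integral_pos
  have heigen : T (hvL.toLp v) = ρ • hvL.toLp v := by
    refine Lp.ext ?_
    filter_upwards [hT (hvL.toLp v), Lp.coeFn_smul ρ (hvL.toLp v), hvL.coeFn_toLp]
      with x hTx hsmul hvx
    rw [hTx, hsmul, Pi.smul_apply, hvx, smul_eq_mul, ← hv.kernelOp_eq x]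
    exact kernelOp_congr_ae k hvL.coeFn_toLp x
  calc ENNReal.ofReal ρ ≤ ‖ρ‖ₑ := by
        rw [← ofReal_norm]; exact ENNReal.ofReal_le_ofReal (le_abs_self ρ)
    _ ≤ spectralRadius ℝ T := enorm_le_spectralRadius_of_apply_eq_smul hne heigen

/-! ### Sub-Markovian semigroups -/

/-- A measurable sub-Markovian semigroup of bounded kernels; only the times `t > 0` matter. -/
structure IsSubMarkovSemigroup (μ : Measure X) (p : ℝ → X → X → ℝ) : Prop where
  measurable : Measurable fun q : ℝ × X × X => p q.1 q.2.1 q.2.2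
  nonneg : ∀ t > 0, ∀ x y, 0 ≤ p t x y
  bddAbove : ∀ t > 0, ∃ M, ∀ x y, p t x y ≤ M
  integral_le_one : ∀ t > 0, ∀ x, ∫ y, p t x y ∂μ ≤ 1
  integral_mul : ∀ s > 0, ∀ t > 0, ∀ x y, ∫ z, p s x z * p t z y ∂μ = p (s + t) x y

namespace IsSubMarkovSemigroup

variable {p : ℝ → X → X → ℝ} {f v : X → ℝ} {r s t ρ : ℝ}

theorem isBoundedKernel (hp : IsSubMarkovSemigroup μ p) (ht : 0 < t) : IsBoundedKernel (p t) where
  measurable := hp.measurable.comp measurable_prodMk_left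
  nonneg := hp.nonneg t ht
  bddAbove := hp.bddAbove t ht

theorem measurable_kernelOp [SFinite μ] (hp : IsSubMarkovSemigroup μ p)
    (hf : AEStronglyMeasurable f μ) : Measurable fun q : ℝ × X => kernelOp μ (p q.1) f q.2 := by
  have heq : ∀ q : ℝ × X, kernelOp μ (p q.1) f q.2 = ∫ y, p q.1 q.2 y * hf.mk f y ∂μ :=
    fun q => kernelOp_congr_ae _ hf.ae_eq_mk _
  simp_rw [heq]
  have hmeas : Measurable fun z : (ℝ × X) × X => p z.1.1 z.1.2 z.2 * hf.mk f z.2 :=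
    (hp.measurable.comp MeasurableEquiv.prodAssoc.measurable).mul
      (hf.stronglyMeasurable_mk.measurable.comp measurable_snd)
  exact hmeas.stronglyMeasurable.integral_prod_right'.measurable

theorem kernelOp_one_le (hp : IsSubMarkovSemigroup μ p) (ht : 0 < t) : kernelOp μ (p t) 1 ≤ 1 :=
  fun x => by simpa [kernelOp] using hp.integral_le_one t ht x

variable [IsFiniteMeasure μ]

theorem kernelOp_kernelOp (hp : IsSubMarkovSemigroup μ p) (hs : 0 < s) (ht : 0 < t)
    (hf : Integrable f μ) : kernelOp μ (p s) (kernelOp μ (p t) f) = kernelOp μ (p (s + t)) f := by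
  ext x
  rw [(hp.isBoundedKernel hs).kernelOp_kernelOp (hp.isBoundedKernel ht) hf]
  simp only [hp.integral_mul s hs t ht, kernelOp]

theorem abs_kernelOp_le (hp : IsSubMarkovSemigroup μ p) (ht : 0 < t) (hf : Integrable f μ) {M : ℝ}
    (hM : ∀ y, |f y| ≤ M) (x : X) : |kernelOp μ (p t) f x| ≤ M :=
  calc |kernelOp μ (p t) f x| ≤ kernelOp μ (p t) (fun _ => M * 1) x :=
        (hp.isBoundedKernel ht).abs_kernelOp_le hf (integrable_const _)
          (.of_forall fun y => (hM y).trans_eq (mul_one M).symm) x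
    _ = M * kernelOp μ (p t) 1 x := kernelOp_const_mul _ M 1 x
    _ ≤ M * 1 := by
        have hM0 : 0 ≤ M := (abs_nonneg _).trans (hM x)
        gcongr
        exact hp.kernelOp_one_le ht x
    _ = M := mul_one M

theorem iterate_kernelOp_one (hp : IsSubMarkovSemigroup μ p) (ht : 0 < t) (n : ℕ) :
    (kernelOp μ (p t))^[n + 1] 1 = kernelOp μ (p ((n + 1) * t)) 1 := by
  induction n with
  | zero => simp
  | succ n ih =>
    rw [iterate_succ_apply', ih,
      hp.kernelOp_kernelOp (f := 1) ht (by positivity) (integrable_const 1)]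
    congr 2
    push_cast
    ring

theorem kernelOp_natCast_add_one_le_iterate (hp : IsSubMarkovSemigroup μ p) (hs : 0 < s) (n : ℕ) :
    kernelOp μ (p (n + s)) 1 ≤ (kernelOp μ (p 1))^[n] 1 := by
  induction n with
  | zero => simpa using hp.kernelOp_one_le hs
  | succ n ih =>
    have hns : 0 < n + s := by positivity
    have h1 := hp.isBoundedKernel one_pos
    calc kernelOp μ (p ((n + 1 : ℕ) + s)) 1
        = kernelOp μ (p 1) (kernelOp μ (p (n + s)) 1) := by
          rw [hp.kernelOp_kernelOp (f := 1) one_pos hns (integrable_const 1)]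
          congr 2
          push_cast
          ring
      _ ≤ kernelOp μ (p 1) ((kernelOp μ (p 1))^[n] 1) :=
          h1.kernelOp_mono ((hp.isBoundedKernel hns).integrable_kernelOp (integrable_const 1))
            (h1.integrable_iterate_one n) ih
      _ = (kernelOp μ (p 1))^[n + 1] 1 := by rw [iterate_succ_apply']

theorem exists_kernelOp_one_le_rpow (hp : IsSubMarkovSemigroup μ p)
    (hr : growthRate μ (p 1) < r) :
    ∃ C, 1 ≤ C ∧ ∀ s > 0, ∀ x, kernelOp μ (p s) 1 x ≤ C * r ^ s := by
  have hr0 : 0 < r := (growthRate_nonneg _).trans_lt hr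
  obtain ⟨C, hC0, hC⟩ := (hp.isBoundedKernel one_pos).exists_iterate_one_le hr
  refine ⟨max 1 (C * max 1 r⁻¹), le_max_left _ _, fun s hs x => ?_⟩
  obtain ⟨n, u, hu0, hu1, rfl⟩ : ∃ (n : ℕ) (u : ℝ), 0 < u ∧ u ≤ 1 ∧ s = n + u := by
    obtain ⟨n, hn⟩ := Nat.exists_eq_add_one_of_ne_zero (Nat.ceil_pos.2 hs).ne'
    have hns : (n : ℝ) < s := Nat.lt_ceil.1 (by lia)
    have hsn : s ≤ n + 1 := by simpa [hn] using Nat.le_ceil s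
    exact ⟨n, s - n, by linarith, by linarith, by ring⟩
  have hru : (r ^ u)⁻¹ ≤ max 1 r⁻¹ := by
    rw [← Real.inv_rpow hr0.le]
    exact rpow_le_max_one (by positivity) hu0.le hu1
  calc kernelOp μ (p (n + u)) 1 x ≤ (kernelOp μ (p 1))^[n] 1 x :=
        hp.kernelOp_natCast_add_one_le_iterate hu0 n x
    _ ≤ C * r ^ n := hC n x
    _ = C * (r ^ u)⁻¹ * r ^ (n + u) := by
        rw [Real.rpow_add hr0, Real.rpow_natCast]; field_simp
    _ ≤ max 1 (C * max 1 r⁻¹) * r ^ (n + u) := by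
        gcongr
        exact le_max_of_le_right (by gcongr)

theorem isGrowthBound_rpow (hp : IsSubMarkovSemigroup μ p) (ht : 0 < t)
    (hr : growthRate μ (p 1) < r) : IsGrowthBound μ (p t) (r ^ t) := by
  have hr0 : 0 < r := (growthRate_nonneg _).trans_lt hr
  obtain ⟨C, hC1, hC⟩ := hp.exists_kernelOp_one_le_rpow hr
  refine ⟨by positivity, C, fun n x => ?_⟩
  rcases n with _ | n
  · simpa using hC1
  · rw [hp.iterate_kernelOp_one ht, ← Real.rpow_mul_natCast hr0.le]
    convert hC _ (by positivity : 0 < (n + 1) * t) x using 3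
    push_cast
    ring

theorem spectralRadius_le (hp : IsSubMarkovSemigroup μ p) (ht : 0 < t)
    {T : Lp ℝ 2 μ →L[ℝ] Lp ℝ 2 μ} (hT : ∀ f : Lp ℝ 2 μ, T f =ᵐ[μ] kernelOp μ (p t) f) :
    spectralRadius ℝ T ≤ ENNReal.ofReal (growthRate μ (p 1) ^ t) := by
  have hlim : Tendsto (fun r : ℝ => ENNReal.ofReal (r ^ t)) (𝓝[>] growthRate μ (p 1))
      (𝓝 (ENNReal.ofReal (growthRate μ (p 1) ^ t))) :=
    (ENNReal.continuous_ofReal.comp (Real.continuous_rpow_const ht.le)).continuousWithinAt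
  refine ge_of_tendsto hlim (eventually_mem_nhdsWithin.mono fun r hr => ?_)
  have hr0 : 0 < r := (growthRate_nonneg _).trans_lt hr
  exact (hp.isBoundedKernel ht).spectralRadius_le hT (by positivity) (hp.isGrowthBound_rpow ht hr)

end IsSubMarkovSemigroup

/-- The average of `ρ⁻ᵗ Pₜ v` over a unit time interval. If `P₁ v = ρ v`, then `t ↦ ρ⁻ᵗ Pₜ v` has
period `1`, which makes the average a common eigenfunction of all the operators `Pₜ`. -/
def orbitAverage (μ : Measure X) (p : ℝ → X → X → ℝ) (ρ : ℝ) (v : X → ℝ) (x : X) : ℝ :=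
  ∫ t in 0..1, ρ ^ (-t) * kernelOp μ (p t) v x

namespace IsSubMarkovSemigroup

section OrbitAverage

variable {p : ℝ → X → X → ℝ} {v : X → ℝ} {ρ : ℝ} [IsFiniteMeasure μ]

theorem intervalIntegrable_rpow_mul_kernelOp (hp : IsSubMarkovSemigroup μ p) (hρ : 0 < ρ)
    (hv : IsPerronEigenfunction μ (p 1) ρ v) (x : X) {a : ℝ} (ha : 0 ≤ a) :
    IntervalIntegrable (fun t => ρ ^ (-t) * kernelOp μ (p t) v x) volume 0 a := by
  obtain ⟨M, hM⟩ := hv.exists_abs_le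
  have hcont : Continuous fun t : ℝ => ρ ^ (-t) :=
    (Real.continuous_const_rpow hρ.ne').comp continuous_neg
  have hmeas : Measurable fun t => kernelOp μ (p t) v x :=
    (hp.measurable_kernelOp hv.integrable.1).comp measurable_prodMk_right
  rw [intervalIntegrable_iff_integrableOn_Ioc_of_le ha]
  refine (hcont.integrableOn_Ioc).mul_bdd hmeas.aestronglyMeasurable (c := M) ?_
  exact (ae_restrict_mem measurableSet_Ioc).mono fun t ht =>
    hp.abs_kernelOp_le ht.1 hv.integrable hM x

theorem integrable_prod_rpow_mul_kernelOp (hp : IsSubMarkovSemigroup μ p) (hρ : 0 < ρ)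
    (hv : IsPerronEigenfunction μ (p 1) ρ v) {h : X → ℝ} (hh : Integrable h μ) :
    Integrable (uncurry fun t y => h y * (ρ ^ (-t) * kernelOp μ (p t) v y))
      ((volume.restrict (Ioc 0 1)).prod μ) := by
  obtain ⟨M, hM⟩ := hv.exists_abs_le
  have hcont : Continuous fun t : ℝ => ρ ^ (-t) :=
    (Real.continuous_const_rpow hρ.ne').comp continuous_neg
  have hbound : ∀ᵐ q : ℝ × X ∂(volume.restrict (Ioc 0 1)).prod μ,
      ‖kernelOp μ (p q.1) v q.2‖ ≤ M :=
    (Measure.quasiMeasurePreserving_fst.ae (ae_restrict_mem measurableSet_Ioc)).mono fun q hq =>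
      hp.abs_kernelOp_le hq.1 hv.integrable hM q.2
  refine ((hcont.integrableOn_Ioc.mul_prod hh).mul_bdd
    (hp.measurable_kernelOp hv.integrable.1).aestronglyMeasurable hbound).congr
    (.of_forall fun q => ?_)
  simp only [uncurry]
  ring

theorem integral_mul_orbitAverage (hp : IsSubMarkovSemigroup μ p) (hρ : 0 < ρ)
    (hv : IsPerronEigenfunction μ (p 1) ρ v) {h : X → ℝ} (hh : Integrable h μ) :
    ∫ y, h y * orbitAverage μ p ρ v y ∂μ
      = ∫ t in 0..1, ρ ^ (-t) * ∫ y, h y * kernelOp μ (p t) v y ∂μ := by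
  simp only [orbitAverage, intervalIntegral.integral_of_le zero_le_one, ← integral_const_mul]
  rw [← integral_integral_swap (hp.integrable_prod_rpow_mul_kernelOp hρ hv hh)]
  simp only [mul_left_comm]

theorem integral_kernelOp_pos (hp : IsSubMarkovSemigroup μ p) (hρ : 0 < ρ)
    (hv : IsPerronEigenfunction μ (p 1) ρ v) {t : ℝ} (ht0 : 0 < t) (ht1 : t < 1) :
    0 < ∫ x, kernelOp μ (p t) v x ∂μ := by
  have hPv := (hp.isBoundedKernel ht0).kernelOp_nonneg (μ := μ) hv.nonneg
  refine (integral_nonneg hPv).lt_of_ne fun h0 => ?_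
  have hzero := (integral_eq_zero_iff_of_nonneg hPv
    ((hp.isBoundedKernel ht0).integrable_kernelOp hv.integrable)).1 h0.symm
  have hv0 : ∀ x, v x = 0 := fun x => by
    have h1 : kernelOp μ (p (1 - t)) (kernelOp μ (p t) v) x = ρ * v x := by
      rw [hp.kernelOp_kernelOp (sub_pos.2 ht1) ht0 hv.integrable, sub_add_cancel, hv.kernelOp_eq]
    rw [kernelOp_congr_ae _ hzero] at h1
    simpa [kernelOp, hρ.ne'] using h1.symm
  simpa [hv0] using hv.integral_pos

theorem kernelOp_orbitAverage (hp : IsSubMarkovSemigroup μ p) (hρ : 0 < ρ)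
    (hv : IsPerronEigenfunction μ (p 1) ρ v) {s : ℝ} (hs : 0 < s) (x : X) :
    kernelOp μ (p s) (orbitAverage μ p ρ v) x = ρ ^ s * orbitAverage μ p ρ v x := by
  have hperiod : ∀ t > 0, ρ ^ (-(t + 1)) * kernelOp μ (p (t + 1)) v x
      = ρ ^ (-t) * kernelOp μ (p t) v x := fun t ht => by
    have hPv : kernelOp μ (p 1) v = fun y => ρ * v y := funext hv.kernelOp_eq
    rw [← hp.kernelOp_kernelOp ht one_pos hv.integrable, hPv, kernelOp_const_mul, ← mul_assoc,
      ← Real.rpow_add_one hρ.ne']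
    ring_nf
  calc kernelOp μ (p s) (orbitAverage μ p ρ v) x
      = ∫ t in 0..1, ρ ^ (-t) * kernelOp μ (p s) (kernelOp μ (p t) v) x :=
        hp.integral_mul_orbitAverage hρ hv
          (((hp.isBoundedKernel hs).memLp_apply x 1).integrable le_rfl)
    _ = ∫ t in 0..1, ρ ^ s * (ρ ^ (-(t + s)) * kernelOp μ (p (t + s)) v x) := by
        refine intervalIntegral.integral_congr_uIoo fun t ht => ?_
        rw [uIoo_of_le zero_le_one] at ht
        rw [hp.kernelOp_kernelOp hs ht.1 hv.integrable, ← mul_assoc, ← Real.rpow_add hρ]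
        ring_nf
    _ = ρ ^ s * orbitAverage μ p ρ v x := by
        rw [intervalIntegral.integral_const_mul, orbitAverage]
        congr 1
        exact intervalIntegral_comp_add_right_of_forall_pos zero_le_one hs.le
          (fun a ha => hp.intervalIntegrable_rpow_mul_kernelOp hρ hv x ha) hperiod

theorem integral_orbitAverage_pos (hp : IsSubMarkovSemigroup μ p) (hρ : 0 < ρ)
    (hv : IsPerronEigenfunction μ (p 1) ρ v) : 0 < ∫ x, orbitAverage μ p ρ v x ∂μ := by
  have hone := hp.integral_mul_orbitAverage hρ hv (integrable_const 1)
  have hint := (hp.integrable_prod_rpow_mul_kernelOp hρ hv (integrable_const 1)).integral_prod_left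
  simp only [uncurry_apply_pair, one_mul, integral_const_mul] at hone hint
  rw [hone]
  exact intervalIntegral.intervalIntegral_pos_of_pos_on
    ((intervalIntegrable_iff_integrableOn_Ioc_of_le zero_le_one).2 hint)
    (fun t ht => mul_pos (Real.rpow_pos_of_pos hρ _) (hp.integral_kernelOp_pos hρ hv ht.1 ht.2))
    one_pos

theorem isPerronEigenfunction_orbitAverage (hp : IsSubMarkovSemigroup μ p) (hρ : 0 < ρ)
    (hv : IsPerronEigenfunction μ (p 1) ρ v) {s : ℝ} (hs : 0 < s) :
    IsPerronEigenfunction μ (p s) (ρ ^ s) (orbitAverage μ p ρ v) where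
  integrable := by
    unfold orbitAverage
    simpa only [uncurry_apply_pair, one_mul, intervalIntegral.integral_of_le zero_le_one] using
      (hp.integrable_prod_rpow_mul_kernelOp hρ hv (integrable_const 1)).integral_prod_right
  nonneg x := by
    rw [orbitAverage, intervalIntegral.integral_of_le zero_le_one]
    exact setIntegral_nonneg measurableSet_Ioc fun t ht =>
      mul_nonneg (Real.rpow_nonneg hρ.le _) ((hp.isBoundedKernel ht.1).kernelOp_nonneg hv.nonneg x)
  bddAbove := by
    obtain ⟨M, hM⟩ := hv.exists_abs_le
    refine ⟨max 1 ρ⁻¹ * M * |1 - 0|, fun x => (le_abs_self _).trans ?_⟩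
    rw [orbitAverage, ← Real.norm_eq_abs]
    refine intervalIntegral.norm_integral_le_of_norm_le_const fun t ht => ?_
    rw [uIoc_of_le zero_le_one] at ht
    rw [norm_mul, Real.norm_of_nonneg (by positivity), Real.rpow_neg hρ.le, ← Real.inv_rpow hρ.le]
    exact mul_le_mul (rpow_le_max_one (by positivity) ht.1.le ht.2)
      (hp.abs_kernelOp_le ht.1 hv.integrable hM x) (norm_nonneg _) (by positivity)
  integral_pos := hp.integral_orbitAverage_pos hρ hv
  kernelOp_eq := hp.kernelOp_orbitAverage hρ hv hs

theorem exists_forall_isPerronEigenfunction [MeasurableSpace.CountablyGenerated X]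
    (hp : IsSubMarkovSemigroup μ p) (hρ : 0 < growthRate μ (p 1)) :
    ∃ φ, ∀ t > 0, IsPerronEigenfunction μ (p t) (growthRate μ (p 1) ^ t) φ := by
  obtain ⟨v, hv⟩ := (hp.isBoundedKernel one_pos).exists_isPerronEigenfunction_growthRate hρ
  exact ⟨_, fun t ht => hp.isPerronEigenfunction_orbitAverage hρ hv ht⟩

end OrbitAverage

theorem spectralRadius_eq [IsFiniteMeasure μ] {p : ℝ → X → X → ℝ} {φ : X → ℝ} {t : ℝ}
    (hp : IsSubMarkovSemigroup μ p) (ht : 0 < t)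
    (hφ : IsPerronEigenfunction μ (p t) (growthRate μ (p 1) ^ t) φ)
    {T : Lp ℝ 2 μ →L[ℝ] Lp ℝ 2 μ} (hT : ∀ f : Lp ℝ 2 μ, T f =ᵐ[μ] kernelOp μ (p t) f) :
    spectralRadius ℝ T = ENNReal.ofReal (growthRate μ (p 1) ^ t) :=
  (hp.spectralRadius_le ht hT).antisymm (hφ.le_spectralRadius hT)

end IsSubMarkovSemigroup

end Kernels

/-! ### Semigroups on a subset -/

section ZeroExtend

variable {X : Type*}

/-- The kernels `p t`, `t > 0`, on `D`, extended by zero to the whole space and to times `t ≤ 0`. -/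
def zeroExtend (D : Set X) (p : ℝ → X → X → ℝ) (t : ℝ) (x y : X) : ℝ :=
  (Ioi 0 ×ˢ D ×ˢ D).indicator (fun q : ℝ × X × X => p q.1 q.2.1 q.2.2) (t, x, y)

variable {D : Set X} {p : ℝ → X → X → ℝ} {t : ℝ} {x y : X}

theorem zeroExtend_of_mem (ht : 0 < t) (hx : x ∈ D) (hy : y ∈ D) :
    zeroExtend D p t x y = p t x y :=
  indicator_of_mem (show (t, x, y) ∈ Ioi 0 ×ˢ D ×ˢ D from ⟨ht, hx, hy⟩) _

theorem zeroExtend_of_left_notMem (hx : x ∉ D) : zeroExtend D p t x y = 0 :=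
  indicator_of_notMem (fun h => hx h.2.1) _

theorem zeroExtend_of_right_notMem (hy : y ∉ D) : zeroExtend D p t x y = 0 :=
  indicator_of_notMem (fun h => hy h.2.2) _

theorem continuousOn_zeroExtend [TopologicalSpace X]
    (hcont : ContinuousOn (fun q : ℝ × X × X => p q.1 q.2.1 q.2.2) (Ioi 0 ×ˢ D ×ˢ D))
    (ht : 0 < t) : ContinuousOn (uncurry (zeroExtend D p t)) (D ×ˢ D) :=
  (hcont.comp (f := fun q : X × X => (t, q)) (by fun_prop) fun _ hq => ⟨mem_Ioi.2 ht, hq⟩).congr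
    fun _ hq => zeroExtend_of_mem ht hq.1 hq.2

variable [MeasurableSpace X] {μ : Measure X}

theorem kernelOp_zeroExtend (hD : MeasurableSet D) (ht : 0 < t) (hx : x ∈ D) (f : X → ℝ) :
    kernelOp (μ.restrict D) (zeroExtend D p t) f x = ∫ y in D, p t x y * f y ∂μ :=
  setIntegral_congr_fun hD fun y hy => by
    rw [zeroExtend_of_mem ht hx hy]

variable [TopologicalSpace X] [SecondCountableTopology X] [BorelSpace X]

theorem isSubMarkovSemigroup_zeroExtend (hD : MeasurableSet D)
    (hcont : ContinuousOn (fun q : ℝ × X × X => p q.1 q.2.1 q.2.2) (Ioi 0 ×ˢ D ×ˢ D))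
    (hnonneg : ∀ t > 0, ∀ x ∈ D, ∀ y ∈ D, 0 ≤ p t x y)
    (hbdd : ∀ t > 0, ∃ M, ∀ x ∈ D, ∀ y ∈ D, p t x y ≤ M)
    (hsub : ∀ t > 0, ∀ x ∈ D, (∫ y in D, p t x y ∂μ) ≤ 1)
    (hsemi : ∀ s > 0, ∀ t > 0, ∀ x ∈ D, ∀ y ∈ D,
      p (t + s) x y = ∫ z in D, p t x z * p s z y ∂μ) :
    IsSubMarkovSemigroup (μ.restrict D) (zeroExtend D p) where
  measurable := by
    classical
    have := hcont.measurable_piecewise (g := 0) continuousOn_const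
      (measurableSet_Ioi.prod (hD.prod hD))
    rwa [piecewise_eq_indicator] at this
  nonneg t _ x y := indicator_nonneg (fun q hq => hnonneg _ hq.1 _ hq.2.1 _ hq.2.2) _
  bddAbove t ht := by
    obtain ⟨M, hM⟩ := hbdd t ht
    refine ⟨max M 0, fun x y => indicator_apply_le' (fun hq => ?_) fun _ => le_max_right _ _⟩
    exact le_max_of_le_left (hM x hq.2.1 y hq.2.2)
  integral_le_one t ht x := by
    by_cases hx : x ∈ D
    · rw [setIntegral_congr_fun hD fun y hy => zeroExtend_of_mem ht hx hy]
      exact hsub t ht x hx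
    · simp [zeroExtend_of_left_notMem hx]
  integral_mul s hs t ht x y := by
    by_cases hx : x ∈ D
    · by_cases hy : y ∈ D
      · rw [zeroExtend_of_mem (add_pos hs ht) hx hy, hsemi t ht s hs x hx y hy]
        refine setIntegral_congr_fun hD fun z hz => ?_
        rw [zeroExtend_of_mem hs hx hz, zeroExtend_of_mem ht hz hy]
      · simp [zeroExtend_of_right_notMem hy]
    · simp [zeroExtend_of_left_notMem hx]

theorem growthRate_zeroExtend_pos [IsFiniteMeasure (μ.restrict D)] (hD : MeasurableSet D)
    (hD0 : μ D ≠ 0) (hp : IsSubMarkovSemigroup (μ.restrict D) (zeroExtend D p))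
    (hcont : ContinuousOn (fun q : ℝ × X × X => p q.1 q.2.1 q.2.2) (Ioi 0 ×ˢ D ×ˢ D))
    (hpos : ∀ x ∈ D, 0 < p 1 x x) :
    0 < growthRate (μ.restrict D) (zeroExtend D p 1) := by
  obtain ⟨x, hx, hμx⟩ := exists_mem_forall_mem_nhdsWithin_pos_measure hD0
  refine (hp.isBoundedKernel one_pos).growthRate_pos hD hx (fun s hs => ?_)
    (continuousOn_zeroExtend hcont one_pos (x, x) ⟨hx, hx⟩)
    ((hpos x hx).trans_eq (zeroExtend_of_mem one_pos hx hx).symm)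
  rw [Measure.restrict_apply' hD]
  exact hμx _ (inter_mem hs self_mem_nhdsWithin)

theorem principal_eigenfunction_exists_general (hD : MeasurableSet D) (hD0 : μ D ≠ 0)
    (hDtop : μ D ≠ ⊤)
    (hcont : ContinuousOn (fun q : ℝ × X × X => p q.1 q.2.1 q.2.2) (Ioi 0 ×ˢ D ×ˢ D))
    (hpos : ∀ t > 0, ∀ x ∈ D, ∀ y ∈ D, 0 < p t x y)
    (hbdd : ∀ t > 0, ∃ M, ∀ x ∈ D, ∀ y ∈ D, p t x y ≤ M)
    (hsub : ∀ t > 0, ∀ x ∈ D, (∫ y in D, p t x y ∂μ) ≤ 1)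
    (hsemi : ∀ s > 0, ∀ t > 0, ∀ x ∈ D, ∀ y ∈ D,
      p (t + s) x y = ∫ z in D, p t x z * p s z y ∂μ) :
    ∃ (lam : ℝ) (φ : X → ℝ),
      ContinuousOn φ D ∧ (∀ x ∈ D, 0 < φ x) ∧ (∃ M, ∀ x ∈ D, φ x ≤ M) ∧
      (∫ x in D, φ x ^ 2 ∂μ) = 1 ∧
      (∀ t > 0, ∀ x ∈ D, (∫ y in D, p t x y * φ y ∂μ) = Real.exp (-lam * t) * φ x) ∧
      (∀ t > 0, ∀ T : Lp ℝ 2 (μ.restrict D) →L[ℝ] Lp ℝ 2 (μ.restrict D),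
        (∀ f : Lp ℝ 2 (μ.restrict D),
          ∀ᵐ x ∂(μ.restrict D), T f x = ∫ y in D, p t x y * f y ∂μ) →
        spectralRadius ℝ T = ENNReal.ofReal (Real.exp (-lam * t))) := by
  have : IsFiniteMeasure (μ.restrict D) := isFiniteMeasure_restrict.2 hDtop
  have hp := isSubMarkovSemigroup_zeroExtend hD hcont
    (fun t ht x hx y hy => (hpos t ht x hx y hy).le) hbdd hsub hsemi
  have hρ := growthRate_zeroExtend_pos hD hD0 hp hcont fun x hx => hpos 1 one_pos x hx x hx
  set ρ := growthRate (μ.restrict D) (zeroExtend D p 1)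
  obtain ⟨φ, hφ⟩ := hp.exists_forall_isPerronEigenfunction hρ
  obtain ⟨c, hc, hnorm⟩ := (hφ 1 one_pos).exists_integral_sq_eq_one
  have hcφ := fun t (ht : 0 < t) => (hφ t ht).const_mul hc
  have h1 := hp.isBoundedKernel one_pos
  have hexp : ∀ t, Real.exp (-(-Real.log ρ) * t) = ρ ^ t := fun t => by
    rw [neg_neg, Real.rpow_def_of_pos hρ]
  refine ⟨-Real.log ρ, fun x => c * φ x, ?_, fun x hx => ?_, ?_, hnorm, fun t ht x hx => ?_,
    fun t ht T hT => ?_⟩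
  · refine (hcφ 1 one_pos).continuousOn h1 (by positivity) ?_
    filter_upwards [ae_restrict_mem hD] with y hy
    exact (continuousOn_zeroExtend hcont one_pos).comp (by fun_prop) fun x hx => mk_mem_prod hx hy
  · refine (hcφ 1 one_pos).pos_of_ae_pos h1 (by positivity) ?_
    filter_upwards [ae_restrict_mem hD] with y hy
    rw [zeroExtend_of_mem one_pos hx hy]
    exact hpos 1 one_pos x hx y hy
  · exact (hcφ 1 one_pos).bddAbove.imp fun M hM x _ => hM x
  · rw [← kernelOp_zeroExtend hD ht hx, (hcφ t ht).kernelOp_eq, hexp]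
  · rw [hexp]
    refine hp.spectralRadius_eq ht (hφ t ht) fun f => ?_
    filter_upwards [hT f, ae_restrict_mem hD] with x hTx hx
    rw [hTx, kernelOp_zeroExtend hD ht hx]

end ZeroExtend

/-- existence of the principal eigenvalue and a bounded strictly positive
continuous principal eigenfunction for a strictly positive continuous sub-Markovian
kernel semigroup on a bounded open set; `e^{-λ₁ t}` is the spectral radius of `P_t`
on `L²(D; dx)`. -/
theorem principal_eigenfunction_exists (d : ℕ) (D : Set (EuclideanSpace ℝ (Fin d)))
    (hD : IsOpen D) (hDbdd : Bornology.IsBounded D) (hDne : D.Nonempty)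
    (p : ℝ → EuclideanSpace ℝ (Fin d) → EuclideanSpace ℝ (Fin d) → ℝ)
    (hcont : ContinuousOn
      (fun q : ℝ × EuclideanSpace ℝ (Fin d) × EuclideanSpace ℝ (Fin d) => p q.1 q.2.1 q.2.2)
      (Set.Ioi 0 ×ˢ D ×ˢ D))
    (hpos : ∀ t > 0, ∀ x ∈ D, ∀ y ∈ D, 0 < p t x y)
    (hbdd : ∀ t > 0, ∃ M, ∀ x ∈ D, ∀ y ∈ D, p t x y ≤ M)
    (hsub : ∀ t > 0, ∀ x ∈ D, (∫ y in D, p t x y) ≤ 1)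
    (hsemi : ∀ s > 0, ∀ t > 0, ∀ x ∈ D, ∀ y ∈ D,
      p (t + s) x y = ∫ z in D, p t x z * p s z y) :
    ∃ (lam : ℝ) (φ : EuclideanSpace ℝ (Fin d) → ℝ),
      ContinuousOn φ D ∧ (∀ x ∈ D, 0 < φ x) ∧ (∃ M, ∀ x ∈ D, φ x ≤ M) ∧
      (∫ x in D, φ x ^ 2) = 1 ∧
      (∀ t > 0, ∀ x ∈ D, (∫ y in D, p t x y * φ y) = Real.exp (-lam * t) * φ x) ∧
      (∀ t > 0, ∀ T : Lp ℝ 2 (volume.restrict D) →L[ℝ] Lp ℝ 2 (volume.restrict D),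
        (∀ f : Lp ℝ 2 (volume.restrict D),
          ∀ᵐ x ∂(volume.restrict D), T f x = ∫ y in D, p t x y * f y) →
        spectralRadius ℝ T = ENNReal.ofReal (Real.exp (-lam * t))) := by
  exact principal_eigenfunction_exists_general hD.measurableSet (hD.measure_pos volume hDne).ne'
    hDbdd.measure_lt_top.ne hcont hpos hbdd hsub hsemi
end
end

section
/- Let d ≥ 1 and α > 0. Then there exists a constant c = c(d, α) > 0 such that for all x, y ∈ ℝ^d: ∫_{ℝ^d} min(1, |x−z|^{−(d+α)})·min(1, |z−y|^{−(d+α)}) dz ≤ c·min(1, |x−y|^{−(d+α)}). -/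
open MeasureTheory Metric Set

noncomputable section

/-!
If `‖u‖ ≤ ‖v‖`, then `‖u + v‖ ≤ 2 * ‖v‖`, so the smaller of the two values of the kernel `K` at
`u` and `v` is at most a constant times `K (u + v)`. Writing the product `K u * K v` as the minimum
times the maximum, with `u = x - z` and `v = z - y`, gives
`K (x - z) * K (z - y) ≤ C * K (x - y) * (K (x - z) + K (z - y))`,
and integrating in `z` costs only two translates of the finite integral `∫ K`.
-/

section QuasiMin

variable {G : Type*} [AddCommGroup G] {K : G → ℝ} {C : ℝ}

lemma mul_le_of_min_le_mul_add (hK : ∀ u, 0 ≤ K u)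
    (hmin : ∀ u v, min (K u) (K v) ≤ C * K (u + v)) (u v : G) :
    K u * K v ≤ C * K (u + v) * (K u + K v) :=
  calc K u * K v = min (K u) (K v) * max (K u) (K v) := (min_mul_max _ _).symm
    _ ≤ C * K (u + v) * (K u + K v) :=
      mul_le_mul (hmin u v) (max_le_add_of_nonneg (hK u) (hK v))
        (le_max_of_le_left (hK u)) ((le_min (hK u) (hK v)).trans (hmin u v))

lemma mul_sub_sub_le_of_min_le_mul_add (hK : ∀ u, 0 ≤ K u)
    (hmin : ∀ u v, min (K u) (K v) ≤ C * K (u + v)) (x y z : G) :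
    K (x - z) * K (z - y) ≤ C * K (x - y) * (K (x - z) + K (z - y)) := by
  simpa only [sub_add_sub_cancel] using mul_le_of_min_le_mul_add hK hmin (x - z) (z - y)

variable [MeasurableSpace G] [MeasurableAdd G] [MeasurableNeg G] {μ : Measure G}
  [μ.IsAddLeftInvariant] [μ.IsNegInvariant]

lemma integrable_mul_sub_sub_of_min_le_mul_add (hK : ∀ u, 0 ≤ K u) (hint : Integrable K μ)
    (hmin : ∀ u v, min (K u) (K v) ≤ C * K (u + v)) (x y : G) :
    Integrable (fun z ↦ K (x - z) * K (z - y)) μ := by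
  have hx : Integrable (fun z ↦ K (x - z)) μ := hint.comp_sub_left x
  have hy : Integrable (fun z ↦ K (z - y)) μ := hint.comp_sub_right y
  refine ((hx.add hy).const_mul (C * K (x - y))).mono' (hx.1.mul hy.1) (.of_forall fun z ↦ ?_)
  rw [Real.norm_of_nonneg (mul_nonneg (hK _) (hK _))]
  exact mul_sub_sub_le_of_min_le_mul_add hK hmin x y z

lemma integral_mul_sub_sub_le_of_min_le_mul_add (hK : ∀ u, 0 ≤ K u) (hint : Integrable K μ)
    (hmin : ∀ u v, min (K u) (K v) ≤ C * K (u + v)) (x y : G) :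
    ∫ z, K (x - z) * K (z - y) ∂μ ≤ 2 * C * (∫ z, K z ∂μ) * K (x - y) := by
  have hx : Integrable (fun z ↦ K (x - z)) μ := hint.comp_sub_left x
  have hy : Integrable (fun z ↦ K (z - y)) μ := hint.comp_sub_right y
  calc ∫ z, K (x - z) * K (z - y) ∂μ
      ≤ ∫ z, C * K (x - y) * (K (x - z) + K (z - y)) ∂μ :=
        integral_mono (integrable_mul_sub_sub_of_min_le_mul_add hK hint hmin x y)
          ((hx.add hy).const_mul _) (mul_sub_sub_le_of_min_le_mul_add hK hmin x y)
    _ = C * K (x - y) * ((∫ z, K z ∂μ) + ∫ z, K z ∂μ) := by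
        rw [integral_const_mul, integral_add hx hy, integral_sub_left_eq_self,
          integral_sub_right_eq_self]
    _ = 2 * C * (∫ z, K z ∂μ) * K (x - y) := by ring

end QuasiMin

lemma rpow_neg_le_rpow_mul_rpow_neg {a b C r : ℝ} (hb : 0 < b) (hC : 0 < C) (hr : 0 ≤ r)
    (h : b ≤ C * a) : a ^ (-r) ≤ C ^ r * b ^ (-r) :=
  calc a ^ (-r) ≤ (b / C) ^ (-r) :=
        Real.rpow_le_rpow_of_nonpos (div_pos hb hC) ((div_le_iff₀' hC).2 h) (neg_nonpos.2 hr)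
    _ = C ^ r * b ^ (-r) := by
        rw [Real.div_rpow hb.le hC.le, Real.rpow_neg hC.le, div_inv_eq_mul, mul_comm]

/-- The kernel `min 1 (‖v‖ ^ (-r))` for `0 ≤ r`, comparable to a symmetric stable transition
density when `r` is the dimension plus the stability index. Capping the base instead of the power
gives the correct value `1` at `v = 0`, where `‖v‖ ^ (-r)` is the junk value `0` for `r ≠ 0`. -/
def cappedPower {E : Type*} [Norm E] (r : ℝ) (v : E) : ℝ :=
  max 1 ‖v‖ ^ (-r)

lemma cappedPower_pos {E : Type*} [Norm E] (r : ℝ) (v : E) : 0 < cappedPower r v :=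
  Real.rpow_pos_of_pos (zero_lt_one.trans_le (le_max_left _ _)) _

lemma continuous_cappedPower {E : Type*} [SeminormedAddGroup E] (r : ℝ) :
    Continuous (cappedPower r : E → ℝ) :=
  (continuous_const.max continuous_norm).rpow_const fun _ ↦
    .inl (zero_lt_one.trans_le (le_max_left _ _)).ne'

lemma cappedPower_le_rpow_mul_cappedPower {E : Type*} [Norm E] {C r : ℝ} {v w : E}
    (hC : 1 ≤ C) (hr : 0 ≤ r) (h : ‖w‖ ≤ C * ‖v‖) :
    cappedPower r v ≤ C ^ r * cappedPower r w := by
  refine rpow_neg_le_rpow_mul_rpow_neg (by positivity) (by positivity) hr ?_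
  rw [mul_max_of_nonneg _ _ (by positivity), mul_one]
  exact max_le_max hC h

lemma min_cappedPower_le {E : Type*} [SeminormedAddGroup E] {r : ℝ} (hr : 0 ≤ r) (u v : E) :
    min (cappedPower r u) (cappedPower r v) ≤ 2 ^ r * cappedPower r (u + v) := by
  have htri : ‖u + v‖ ≤ ‖u‖ + ‖v‖ := norm_add_le u v
  rcases le_total ‖u‖ ‖v‖ with huv | hvu
  · exact min_le_of_right_le
      (cappedPower_le_rpow_mul_cappedPower one_le_two hr (by linarith))
  · exact min_le_of_left_le
      (cappedPower_le_rpow_mul_cappedPower one_le_two hr (by linarith))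

section Haar

variable {E : Type*} [NormedAddCommGroup E] [NormedSpace ℝ E] [FiniteDimensional ℝ E]
  [MeasurableSpace E] [BorelSpace E] (μ : Measure E) [μ.IsAddHaarMeasure] {r : ℝ}

lemma integrable_cappedPower (hr : Module.finrank ℝ E < r) : Integrable (cappedPower r) μ := by
  refine ((integrable_one_add_norm (μ := μ) hr).const_mul (2 ^ r)).mono'
    (continuous_cappedPower r).aestronglyMeasurable (.of_forall fun v ↦ ?_)
  rw [Real.norm_of_nonneg (cappedPower_pos r v).le]
  refine rpow_neg_le_rpow_mul_rpow_neg (by positivity) two_pos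
    ((Nat.cast_nonneg _).trans hr.le) ?_
  linarith [le_max_left 1 ‖v‖, le_max_right 1 ‖v‖]

lemma integral_cappedPower_pos (hr : Module.finrank ℝ E < r) : 0 < ∫ v, cappedPower r v ∂μ :=
  integral_pos_of_integrable_nonneg_nonzero (x := 0) (continuous_cappedPower r)
    (integrable_cappedPower μ hr) (fun v ↦ (cappedPower_pos r v).le) (cappedPower_pos r 0).ne'

theorem convolution_inequality_general (hr : Module.finrank ℝ E < r) :
    ∃ c > 0, ∀ x y : E,
      ∫ z, max 1 ‖x - z‖ ^ (-r) * max 1 ‖z - y‖ ^ (-r) ∂μ ≤ c * max 1 ‖x - y‖ ^ (-r) :=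
  ⟨2 * 2 ^ r * ∫ v, cappedPower r v ∂μ,
    mul_pos (by positivity) (integral_cappedPower_pos μ hr),
    integral_mul_sub_sub_le_of_min_le_mul_add (fun v ↦ (cappedPower_pos r v).le)
      (integrable_cappedPower μ hr) (min_cappedPower_le ((Nat.cast_nonneg _).trans hr.le))⟩

end Haar

/-- the convolution inequality
`∫ min(1,|x-z|^{-(d+α)}) min(1,|z-y|^{-(d+α)}) dz ≤ c min(1,|x-y|^{-(d+α)})`.
Here `min(1, r^{-(d+α)})` is encoded as `(max 1 r)^{-(d+α)}`, which agrees with it for all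
`r > 0` and gives the correct value `1` at `r = 0`. -/
theorem convolution_inequality (d : ℕ) (hd : 1 ≤ d) (α : ℝ) (hα : 0 < α) :
    ∃ c > 0, ∀ x y : EuclideanSpace ℝ (Fin d),
      (∫ z, max 1 ‖x - z‖ ^ (-((d : ℝ) + α)) * max 1 ‖z - y‖ ^ (-((d : ℝ) + α)))
        ≤ c * max 1 ‖x - y‖ ^ (-((d : ℝ) + α)) := by
  exact convolution_inequality_general volume (by simpa using hα)
end
end
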